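/- For any 0 < α < 1 and 0 < ϱ < 1, the Shiryaev–Roberts procedure T(α,ϱ) = inf{n ≥ 1 : R_n ≥ (1−α)/(ϱα)} belongs to the Bayesian class Δ(α,ϱ), i.e., Σ_{k≥0} ϱ(1−ϱ)^k P_∞(T(α,ϱ) ≤ k) ≤ α. -/

import Mathlib

/-!
Let `w` be the geometric prior, `T` the Shiryaev–Roberts time with threshold `h`, and
`A = ∑ w k * P∞(T ≤ k)`. On `{T = n}` the sum of the likelihood ratios of `P 0, …, P (n - 1)` is at
least `h`, so a change of measure gives `h * P∞(T = n) ≤ ∑_{k < n} P k (T = n)`. Weighting by `w n`,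
which is at most `w k` for `k < n`, and exchanging the sums,
`h * ∑ w n * P∞(T = n) ≤ ∑ w k * P k (T > k) = ∑ w k * P∞(T > k) = 1 - A`,
because `P k` and `P∞` agree on `F k`. Summation by parts writes `A` as
`∑ (∑_{k ≥ n} w k) * P∞(T = n)`, and `w n = ϱ * ∑_{k ≥ n} w k` since the prior has constant hazard
rate `ϱ`. Hence `ϱ * h * A ≤ 1 - A`, that is, `A ≤ 1 / (1 + ϱ * h) = α`.
-/

open MeasureTheory Filter Set Topology ENNReal

noncomputable section

/-- A general change-point model: a filtration `F` on `Ω`, probability measures `P k`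
(the change occurs immediately after time `k`) and `Pinf` (no change), such that `P k`
and `Pinf` agree on `F n` for `n ≤ k` and are mutually absolutely continuous
on `F n` for `n > k`. -/
structure ChangePointModel (Ω : Type) [m0 : MeasurableSpace Ω] where
  F : ℕ → MeasurableSpace Ω
  F_le : ∀ n, F n ≤ m0
  F_mono : Monotone F
  F_zero : F 0 = ⊥
  P : ℕ → Measure Ω
  Pinf : Measure Ω
  P_prob : ∀ k, IsProbabilityMeasure (P k)
  Pinf_prob : IsProbabilityMeasure Pinf
  agree : ∀ k n : ℕ, n ≤ k → (P k).trim (F_le n) = Pinf.trim (F_le n)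
  ac₁ : ∀ k n : ℕ, k < n → (P k).trim (F_le n) ≪ Pinf.trim (F_le n)
  ac₂ : ∀ k n : ℕ, k < n → Pinf.trim (F_le n) ≪ (P k).trim (F_le n)

namespace ChangePointModel

variable {Ω : Type} [m0 : MeasurableSpace Ω] (M : ChangePointModel Ω)

/-- The log-likelihood ratio `Z n k = log (d(P k|F n)/d(P∞|F n))`. -/
def Z (n k : ℕ) (ω : Ω) : ℝ :=
  Real.log ((((M.P k).trim (M.F_le n)).rnDeriv (M.Pinf.trim (M.F_le n))) ω).toReal

/-- A detection procedure: a stopping time of the filtration `F` with values in `{1,2,…,∞}`. -/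
def IsDetection (τ : Ω → ℕ∞) : Prop :=
  (∀ ω, 1 ≤ τ ω) ∧ ∀ n : ℕ, MeasurableSet[M.F n] {ω | τ ω ≤ (n : ℕ∞)}

/-- The detection risk `R_ν(τ) = E_ν (τ - ν)⁺`. -/
def risk (ν : ℕ) (τ : Ω → ℕ∞) : ℝ≥0∞ :=
  ∫⁻ ω, ((τ ω - (ν : ℕ∞) : ℕ∞) : ℝ≥0∞) ∂(M.P ν)

/-- The conditional detection risk `R*_ν(τ) = E_ν (τ - ν | τ > ν)`. -/
def crisk (ν : ℕ) (τ : Ω → ℕ∞) : ℝ≥0∞ :=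
  M.risk ν τ / M.P ν {ω | (ν : ℕ∞) < τ ω}

/-- The moment-`ℓ` detection risk `E_ν ((τ - ν)⁺)^ℓ`. -/
def riskPow (ℓ : ℝ) (ν : ℕ) (τ : Ω → ℕ∞) : ℝ≥0∞ :=
  ∫⁻ ω, ((τ ω - (ν : ℕ∞) : ℕ∞) : ℝ≥0∞) ^ ℓ ∂(M.P ν)

/-- The conditional moment-`ℓ` detection risk `E_ν ((τ - ν)^ℓ | τ > ν)`. -/
def criskPow (ℓ : ℝ) (ν : ℕ) (τ : Ω → ℕ∞) : ℝ≥0∞ :=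
  M.riskPow ℓ ν τ / M.P ν {ω | (ν : ℕ∞) < τ ω}

/-- The Bayesian class `Δ(α,ϱ)` of detection procedures with weighted probability of
false alarm at most `α` (geometric prior with parameter `ϱ`). -/
def Delta (α ϱ : ℝ) : Set (Ω → ℕ∞) :=
  {τ | M.IsDetection τ ∧
    ∑' k : ℕ, ENNReal.ofReal (ϱ * (1 - ϱ) ^ k) * M.Pinf {ω | τ ω ≤ (k : ℕ∞)}
      ≤ ENNReal.ofReal α}

/-- The Shiryaev–Roberts statistic `R_n = ∑_{k=1}^n exp (Z_n^{k-1})`. -/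
def SRstat (n : ℕ) (ω : Ω) : ℝ :=
  ∑ k ∈ Finset.range n, Real.exp (M.Z n k ω)

/-- The Shiryaev–Roberts procedure with threshold `h`. -/
def SR (h : ℝ) (ω : Ω) : ℕ∞ :=
  sInf {n : ℕ∞ | ∃ m : ℕ, n = (m : ℕ∞) ∧ 1 ≤ m ∧ h ≤ M.SRstat m ω}

/-- Condition (A1): `Z (k+n) k / n → I` almost surely under `P k`, for every `k`. -/
def CondA1 (I : ℝ) : Prop :=
  ∀ k : ℕ, ∀ᵐ ω ∂(M.P k),
    Tendsto (fun n : ℕ => M.Z (k + n) k ω / n) atTop (𝓝 I)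

/-- Condition (A2): uniform complete convergence of `Z (k+n) k / n` to `I`. -/
def CondA2 (I : ℝ) : Prop :=
  ∀ ε : ℝ, 0 < ε →
    (∑' n : ℕ, ⨆ k : ℕ,
      M.P k {ω | ε < |M.Z (k + (n + 1)) k ω / (n + 1) - I|}) < ⊤

/-- Uniform `r`-complete convergence of `Z (k+n) k / n` to `I`. -/
def CondAr (r I : ℝ) : Prop :=
  ∀ ε : ℝ, 0 < ε →
    (∑' n : ℕ, ENNReal.ofReal ((n + 1 : ℝ) ^ (r - 1)) * ⨆ k : ℕ,
      M.P k {ω | ε < |M.Z (k + (n + 1)) k ω / (n + 1) - I|}) < ⊤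

/-- The class `H(β,k*,m*)` : local probability of a false alarm in windows of
length `m*` starting at `1 ≤ k ≤ k* - m*` is at most `β`. -/
def Hclass (β : ℝ) (kstar mstar : ℕ) : Set (Ω → ℕ∞) :=
  {τ | M.IsDetection τ ∧ ∀ k : ℕ, 1 ≤ k → k + mstar ≤ kstar →
    M.Pinf {ω | (k : ℕ∞) ≤ τ ω ∧ τ ω < ((k + mstar : ℕ) : ℕ∞)} ≤ ENNReal.ofReal β}

/-- The class `H*(β,k*,m*)` : local conditional probability of a false alarm
`P_∞(τ < k+m* | τ > k)` is at most `β` for `1 ≤ k ≤ k* - m*`. -/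
def HclassStar (β : ℝ) (kstar mstar : ℕ) : Set (Ω → ℕ∞) :=
  {τ | M.IsDetection τ ∧ ∀ k : ℕ, 1 ≤ k → k + mstar ≤ kstar →
    M.Pinf {ω | (k : ℕ∞) < τ ω ∧ τ ω < ((k + mstar : ℕ) : ℕ∞)}
        / M.Pinf {ω | (k : ℕ∞) < τ ω} ≤ ENNReal.ofReal β}

end ChangePointModel

/-- `ϱ_{1,β} = 1/(1+|log β|)`. -/
def rho1 (β : ℝ) : ℝ := 1 / (1 + |Real.log β|)

/-- `ϱ_{2,β} = ϱ_{1,β}/(1+|log|log β||)`. -/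
def rho2 (β : ℝ) : ℝ := rho1 β / (1 + |Real.log (|Real.log β|)|)

/-- `α₁(β,m*) = β + (1-ϱ_{1,β})^{m*+1}`. -/
def alpha1 (β : ℝ) (m : ℕ) : ℝ := β + (1 - rho1 β) ^ (m + 1)

/-- `α₂(β,k*) = β (1-ϱ_{2,β})^{k*}`. -/
def alpha2 (β : ℝ) (k : ℕ) : ℝ := β * (1 - rho2 β) ^ k

/-- `α₃(β,k*) = β (1-ϱ_{2,β})^{k*} / (1+β)`. -/
def alpha3 (β : ℝ) (k : ℕ) : ℝ := β * (1 - rho2 β) ^ k / (1 + β)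

lemma tsum_sum_range_succ_eq_tsum_tsum (f : ℕ → ℕ → ℝ≥0∞) :
    ∑' n, ∑ k ∈ Finset.range (n + 1), f k n = ∑' k, ∑' j, f k (k + j) := by
  rw [← ENNReal.tsum_prod (f := fun k j => f k (k + j)),
    ← Finset.HasAntidiagonal.sigmaAntidiagonalEquivProd.tsum_eq, ENNReal.tsum_sigma']
  refine tsum_congr fun n => ?_
  rw [← Finset.Nat.sum_antidiagonal_eq_sum_range_succ_mk (fun p : ℕ × ℕ => f p.1 n),
    ← Finset.sum_coe_sort, tsum_fintype]
  refine Finset.sum_congr rfl fun p _ => ?_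
  simp only [Finset.HasAntidiagonal.sigmaAntidiagonalEquivProd_apply,
    Finset.HasAntidiagonal.mem_antidiagonal.1 p.2]

lemma pairwise_disjoint_setOf_eq_natCast {Ω : Type*} (τ : Ω → ℕ∞) :
    Pairwise fun m n : ℕ => Disjoint {ω | τ ω = m} {ω | τ ω = n} := fun _ _ hmn =>
  Set.disjoint_left.2 fun _ hm hn => hmn (Nat.cast_injective (hm.symm.trans hn))

section ExtendedNatTimes

variable {Ω : Type*} [MeasurableSpace Ω] (μ : Measure Ω) {τ : Ω → ℕ∞}

lemma measure_le_natCast_eq_sum (hτ : ∀ n : ℕ, MeasurableSet {ω | τ ω = n}) (k : ℕ) :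
    μ {ω | τ ω ≤ k} = ∑ n ∈ Finset.range (k + 1), μ {ω | τ ω = n} := by
  have h_union : {ω | τ ω ≤ k} = ⋃ n ∈ Finset.range (k + 1), {ω | τ ω = n} := by
    ext ω
    simp only [ENat.le_natCast_iff, mem_ofPred_eq, mem_iUnion, Finset.mem_range,
      Nat.lt_succ_iff, exists_prop, and_comm]
  rw [h_union, measure_biUnion_finset
    ((pairwise_disjoint_setOf_eq_natCast τ).set_pairwise _) fun n _ => hτ n]

lemma tsum_measure_eq_natCast_le (hτ : ∀ n : ℕ, MeasurableSet {ω | τ ω = n}) (k : ℕ) :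
    ∑' j : ℕ, μ {ω | τ ω = (k + j + 1 : ℕ)} ≤ μ {ω | k < τ ω} := by
  refine (tsum_meas_le_meas_iUnion_of_disjoint μ (fun j => hτ (k + j + 1))
    ((pairwise_disjoint_setOf_eq_natCast τ).comp_of_injective fun i j hij => by
      simpa using hij)).trans (measure_mono (iUnion_subset fun j ω hω => ?_))
  rw [mem_ofPred_eq] at hω ⊢
  rw [hω]
  exact_mod_cast Nat.lt_succ_of_le (Nat.le_add_right k j)

lemma tsum_mul_measure_le_natCast (hτ : ∀ n : ℕ, MeasurableSet {ω | τ ω = n}) (w : ℕ → ℝ≥0∞) :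
    ∑' k : ℕ, w k * μ {ω | τ ω ≤ k} = ∑' n : ℕ, (∑' j, w (n + j)) * μ {ω | τ ω = n} := by
  simp_rw [measure_le_natCast_eq_sum μ hτ, Finset.mul_sum, ← ENNReal.tsum_mul_right]
  exact tsum_sum_range_succ_eq_tsum_tsum fun n k => w k * μ {ω | τ ω = n}

lemma tsum_mul_measure_le_add_tsum_mul_measure_gt [IsProbabilityMeasure μ]
    (hτ : ∀ n : ℕ, MeasurableSet {ω | τ ω ≤ n}) (w : ℕ → ℝ≥0∞) :
    ∑' k : ℕ, w k * μ {ω | τ ω ≤ k} + ∑' k : ℕ, w k * μ {ω | k < τ ω} = ∑' k, w k := by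
  have h_compl (k : ℕ) : {ω | k < τ ω} = {ω | τ ω ≤ k}ᶜ := by ext; simp
  simp_rw [← ENNReal.tsum_add, ← mul_add, h_compl, prob_add_prob_compl (hτ _), mul_one]

end ExtendedNatTimes

namespace ChangePointModel

attribute [instance] P_prob Pinf_prob

variable {Ω : Type} [m0 : MeasurableSpace Ω] (M : ChangePointModel Ω)

/-- The family `M.F` as a bundled filtration, so that Mathlib's stopping times apply to it. -/
def filtration : Filtration ℕ m0 where
  seq := M.F
  mono' := M.F_mono
  le' := M.F_le

section ChangeOfMeasure

variable {M} {n : ℕ} {B : Set Ω}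

lemma P_eq_Pinf {k : ℕ} (hB : MeasurableSet[M.F k] B) : M.P k B = M.Pinf B := by
  rw [← trim_measurableSet_eq (M.F_le k) hB, M.agree k k le_rfl, trim_measurableSet_eq _ hB]

lemma measurable_Z (k : ℕ) : Measurable[M.F n] (M.Z n k) :=
  measurable_llr _ _

/-- `P∞ ≪ P k` on `F n` discards the points where the density vanishes, at which
`exp (log 0) = 1`. -/
lemma ofReal_exp_Z_ae_eq_rnDeriv {k : ℕ} (hkn : k < n) :
    (fun ω => ENNReal.ofReal (Real.exp (M.Z n k ω))) =ᵐ[M.Pinf.trim (M.F_le n)]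
      ((M.P k).trim (M.F_le n)).rnDeriv (M.Pinf.trim (M.F_le n)) := by
  filter_upwards [exp_llr_of_ac' _ _ (M.ac₂ k n hkn),
    Measure.rnDeriv_ne_top ((M.P k).trim (M.F_le n)) _] with ω h_exp h_fin
  exact (congrArg ENNReal.ofReal h_exp).trans (ENNReal.ofReal_toReal h_fin)

lemma setLIntegral_exp_Z {k : ℕ} (hkn : k < n) (hB : MeasurableSet[M.F n] B) :
    ∫⁻ ω in B, ENNReal.ofReal (Real.exp (M.Z n k ω)) ∂(M.Pinf.trim (M.F_le n)) = M.P k B := by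
  rw [lintegral_congr_ae (ae_restrict_of_ae (ofReal_exp_Z_ae_eq_rnDeriv hkn)),
    Measure.setLIntegral_rnDeriv (M.ac₁ k n hkn), trim_measurableSet_eq _ hB]

lemma setLIntegral_SRstat (hB : MeasurableSet[M.F n] B) :
    ∫⁻ ω in B, ENNReal.ofReal (M.SRstat n ω) ∂(M.Pinf.trim (M.F_le n)) =
      ∑ k ∈ Finset.range n, M.P k B := by
  simp_rw [SRstat, ENNReal.ofReal_sum_of_nonneg fun _ _ => (Real.exp_pos _).le]
  rw [lintegral_finsetSum _ fun k _ => (measurable_Z k).exp.ennreal_ofReal]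
  exact Finset.sum_congr rfl fun k hk => setLIntegral_exp_Z (Finset.mem_range.1 hk) hB

lemma ofReal_mul_Pinf_le_sum_P {h : ℝ} (hB : MeasurableSet[M.F n] B)
    (hBh : ∀ ω ∈ B, h ≤ M.SRstat n ω) :
    ENNReal.ofReal h * M.Pinf B ≤ ∑ k ∈ Finset.range n, M.P k B := by
  rw [← setLIntegral_SRstat hB, ← trim_measurableSet_eq (M.F_le n) hB, ← setLIntegral_const]
  exact setLIntegral_mono' hB fun ω hω => ENNReal.ofReal_le_ofReal (hBh ω hω)

end ChangeOfMeasure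

section FalseAlarm

variable {M} {τ : Ω → ℕ∞} {h : ℝ} {w : ℕ → ℝ≥0∞}

lemma tsum_mul_sum_P_le_tsum_mul_Pinf_gt (hτ : IsStoppingTime M.filtration τ) (hw : Antitone w) :
    ∑' n : ℕ, w n * ∑ k ∈ Finset.range n, M.P k {ω | τ ω = n} ≤
      ∑' k : ℕ, w k * M.Pinf {ω | k < τ ω} := by
  have hτ_eq (n : ℕ) : MeasurableSet {ω | τ ω = n} :=
    M.F_le n _ (hτ.measurableSet_eq_of_countable n)
  calc ∑' n : ℕ, w n * ∑ k ∈ Finset.range n, M.P k {ω | τ ω = n}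
      = ∑' n : ℕ, ∑ k ∈ Finset.range (n + 1), w (n + 1) * M.P k {ω | τ ω = (n + 1 : ℕ)} := by
        rw [tsum_eq_zero_add' ENNReal.summable]
        simp only [Finset.range_zero, Finset.sum_empty, mul_zero, zero_add, Finset.mul_sum]
    _ = ∑' k : ℕ, ∑' j : ℕ, w (k + j + 1) * M.P k {ω | τ ω = (k + j + 1 : ℕ)} :=
        tsum_sum_range_succ_eq_tsum_tsum fun k n => w (n + 1) * M.P k {ω | τ ω = (n + 1 : ℕ)}
    _ ≤ ∑' k : ℕ, ∑' j : ℕ, w k * M.P k {ω | τ ω = (k + j + 1 : ℕ)} := by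
        gcongr with k j
        exact hw (by omega)
    _ ≤ ∑' k : ℕ, w k * M.P k {ω | k < τ ω} := by
        simp_rw [ENNReal.tsum_mul_left]
        gcongr with k
        exact tsum_measure_eq_natCast_le _ hτ_eq k
    _ = ∑' k : ℕ, w k * M.Pinf {ω | k < τ ω} :=
        tsum_congr fun k => congrArg (w k * ·) (P_eq_Pinf (hτ.measurableSet_gt k))

lemma ofReal_mul_tsum_mul_Pinf_eq_le (hτ : IsStoppingTime M.filtration τ)
    (hτh : ∀ ω, ∀ n : ℕ, τ ω = n → h ≤ M.SRstat n ω) (hw : Antitone w) :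
    ENNReal.ofReal h * ∑' n : ℕ, w n * M.Pinf {ω | τ ω = n} ≤
      ∑' k : ℕ, w k * M.Pinf {ω | k < τ ω} := by
  refine le_trans ?_ (tsum_mul_sum_P_le_tsum_mul_Pinf_gt hτ hw)
  simp_rw [← ENNReal.tsum_mul_left, mul_left_comm (ENNReal.ofReal h)]
  gcongr with n
  exact ofReal_mul_Pinf_le_sum_P (hτ.measurableSet_eq_of_countable n) fun ω hω => hτh ω n hω

/-- The hypothesis `hc` says that the prior `w` has hazard rate at least `c`. -/
lemma tsum_mul_Pinf_le_le_inv (hτ : IsStoppingTime M.filtration τ)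
    (hτh : ∀ ω, ∀ n : ℕ, τ ω = n → h ≤ M.SRstat n ω) (hw : Antitone w) (hw_sum : ∑' k, w k = 1)
    {c : ℝ≥0∞} (hc : ∀ n, c * ∑' j, w (n + j) ≤ w n) :
    ∑' k : ℕ, w k * M.Pinf {ω | τ ω ≤ k} ≤ (1 + c * ENNReal.ofReal h)⁻¹ := by
  set A := ∑' k : ℕ, w k * M.Pinf {ω | τ ω ≤ k} with hA
  have h_hazard : c * A ≤ ∑' n : ℕ, w n * M.Pinf {ω | τ ω = n} := by
    rw [hA, tsum_mul_measure_le_natCast _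
      fun n => M.F_le n _ (hτ.measurableSet_eq_of_countable n), ← ENNReal.tsum_mul_left]
    simp_rw [← mul_assoc]
    gcongr with n
    exact hc n
  rw [ENNReal.le_inv_iff_mul_le]
  calc A * (1 + c * ENNReal.ofReal h)
      = A + ENNReal.ofReal h * (c * A) := by ring
    _ ≤ A + ENNReal.ofReal h * ∑' n : ℕ, w n * M.Pinf {ω | τ ω = n} := by gcongr
    _ ≤ A + ∑' k : ℕ, w k * M.Pinf {ω | k < τ ω} := by
        gcongr
        exact ofReal_mul_tsum_mul_Pinf_eq_le hτ hτh hw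
    _ = 1 := by
        rw [tsum_mul_measure_le_add_tsum_mul_measure_gt _ fun n => M.F_le n _ (hτ n), hw_sum]

end FalseAlarm

section ShiryaevRoberts

lemma adapted_SRstat : Adapted M.filtration M.SRstat := fun _ =>
  Finset.measurable_sum _ fun k _ => (measurable_Z k).exp

lemma SR_eq_hittingAfter (h : ℝ) : M.SR h = hittingAfter M.SRstat (Ici h) 1 := by
  ext1 ω
  have h_image : {n : ℕ∞ | ∃ m : ℕ, n = m ∧ 1 ≤ m ∧ h ≤ M.SRstat m ω} =
      Nat.cast '' {m : ℕ | 1 ≤ m ∧ M.SRstat m ω ∈ Ici h} := by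
    ext n
    simp only [mem_ofPred_eq, mem_image, mem_Ici, eq_comm, and_comm]
  rw [SR, hittingAfter, h_image]
  split_ifs with h_hit
  · rw [sInf_image]
    exact (ENat.natCast_sInf h_hit).symm
  · have h_empty : {m : ℕ | 1 ≤ m ∧ M.SRstat m ω ∈ Ici h} = ∅ :=
      Set.not_nonempty_iff_eq_empty.1 h_hit
    rw [h_empty, image_empty, sInf_empty]
    rfl

lemma isStoppingTime_SR (h : ℝ) : IsStoppingTime M.filtration (M.SR h) := by
  rw [SR_eq_hittingAfter]
  exact M.adapted_SRstat.isStoppingTime_hittingAfter measurableSet_Ici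

lemma isDetection_SR (h : ℝ) : M.IsDetection (M.SR h) := by
  refine ⟨fun ω => ?_, M.isStoppingTime_SR h⟩
  rw [SR_eq_hittingAfter]
  exact le_hittingAfter ω

variable {M}

lemma le_SRstat_of_SR_eq {h : ℝ} {ω : Ω} {n : ℕ} (hn : M.SR h ω = n) : h ≤ M.SRstat n ω := by
  rw [SR_eq_hittingAfter] at hn
  have h_mem := hittingAfter_mem_set_of_ne_top (hn.trans_ne (ENat.natCast_ne_top n))
  rw [hn] at h_mem
  exact h_mem

end ShiryaevRoberts

end ChangePointModel

/-- The geometric prior on the change time, in the form in which it enters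
`ChangePointModel.Delta`. -/
def geometricPrior (ϱ : ℝ) (k : ℕ) : ℝ≥0∞ :=
  ENNReal.ofReal (ϱ * (1 - ϱ) ^ k)

section GeometricPrior

variable {ϱ : ℝ}

lemma antitone_geometricPrior (h₀ : 0 ≤ ϱ) (h₁ : ϱ ≤ 1) : Antitone (geometricPrior ϱ) :=
  fun _ _ hmn => ENNReal.ofReal_le_ofReal <| mul_le_mul_of_nonneg_left
    (pow_le_pow_of_le_one (sub_nonneg.2 h₁) (sub_le_self 1 h₀) hmn) h₀

lemma tsum_geometricPrior_add (h₀ : 0 < ϱ) (h₁ : ϱ ≤ 1) (n : ℕ) :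
    ∑' j, geometricPrior ϱ (n + j) = ENNReal.ofReal ((1 - ϱ) ^ n) := by
  have hq : 0 ≤ 1 - ϱ := sub_nonneg.2 h₁
  have h_factor (j : ℕ) : geometricPrior ϱ (n + j) =
      ENNReal.ofReal ((1 - ϱ) ^ n) * ENNReal.ofReal ϱ * ENNReal.ofReal (1 - ϱ) ^ j := by
    rw [geometricPrior, ← ENNReal.ofReal_pow hq, ← ENNReal.ofReal_mul (by positivity),
      ← ENNReal.ofReal_mul (by positivity)]
    ring_nf
  have h_one_sub : 1 - ENNReal.ofReal (1 - ϱ) = ENNReal.ofReal ϱ := by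
    rw [← ENNReal.ofReal_one, ← ENNReal.ofReal_sub _ hq, _root_.sub_sub_cancel]
  simp_rw [h_factor]
  rw [ENNReal.tsum_mul_left, ENNReal.tsum_geometric, h_one_sub, mul_assoc,
    ENNReal.mul_inv_cancel (ENNReal.ofReal_pos.2 h₀).ne' ENNReal.ofReal_ne_top, mul_one]

lemma tsum_geometricPrior (h₀ : 0 < ϱ) (h₁ : ϱ ≤ 1) : ∑' k, geometricPrior ϱ k = 1 := by
  simpa using tsum_geometricPrior_add h₀ h₁ 0

lemma ofReal_mul_tsum_geometricPrior_add (h₀ : 0 < ϱ) (h₁ : ϱ ≤ 1) (n : ℕ) :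
    ENNReal.ofReal ϱ * ∑' j, geometricPrior ϱ (n + j) = geometricPrior ϱ n := by
  rw [tsum_geometricPrior_add h₀ h₁, geometricPrior, ENNReal.ofReal_mul h₀.le]

end GeometricPrior

lemma inv_one_add_ofReal_mul_threshold {α ϱ : ℝ} (hα₀ : 0 < α) (hα₁ : α ≤ 1)
    (hϱ : 0 < ϱ) :
    (1 + ENNReal.ofReal ϱ * ENNReal.ofReal ((1 - α) / (ϱ * α)))⁻¹ = ENNReal.ofReal α := by
  have h_inv : 1 + ϱ * ((1 - α) / (ϱ * α)) = α⁻¹ := by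
    field_simp
    ring
  have h_nonneg : 0 ≤ (1 - α) / (ϱ * α) :=
    div_nonneg (sub_nonneg.2 hα₁) (mul_pos hϱ hα₀).le
  rw [← ENNReal.ofReal_mul hϱ.le, ← ENNReal.ofReal_one,
    ← ENNReal.ofReal_add zero_le_one (mul_nonneg hϱ.le h_nonneg), h_inv,
    ENNReal.ofReal_inv_of_pos hα₀, inv_inv]

/-- For any `0 < α < 1` and `0 < ϱ < 1`, the Shiryaev–Roberts procedure
`T(α,ϱ) = inf{n ≥ 1 : R_n ≥ (1-α)/(ϱα)}` belongs to the Bayesian class `Δ(α,ϱ)`. -/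
theorem statement1
    {Ω : Type} [m0 : MeasurableSpace Ω] (M : ChangePointModel Ω)
    (α ϱ : ℝ) (hα : α ∈ Set.Ioo (0 : ℝ) 1) (hϱ : ϱ ∈ Set.Ioo (0 : ℝ) 1) :
    M.SR ((1 - α) / (ϱ * α)) ∈ M.Delta α ϱ := by
  refine ⟨M.isDetection_SR _, ?_⟩
  rw [← inv_one_add_ofReal_mul_threshold hα.1 hα.2.le hϱ.1]
  exact ChangePointModel.tsum_mul_Pinf_le_le_inv (M.isStoppingTime_SR _)
    (fun _ _ => ChangePointModel.le_SRstat_of_SR_eq)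
    (antitone_geometricPrior hϱ.1.le hϱ.2.le) (tsum_geometricPrior hϱ.1 hϱ.2.le)
    fun n => (ofReal_mul_tsum_geometricPrior_add hϱ.1 hϱ.2.le n).le
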